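/- Let N ≥ 2, let μ > 0, λ + μ > 0, a > 0, and γ > 1 be real constants. Suppose (ρ, v) is a smooth solution on ℝ^N of the stationary compressible Navier–Stokes system: div(ρv) = 0, div(ρ v⊗v) = -∇p + μΔv + (μ+λ)∇(div v), with pressure law p = aρ^γ and ρ ≥ 0. Assume ρ ∈ L^∞(ℝ^N), ∇v ∈ L²(ℝ^N), v ∈ L^{N/(N-1)}(ℝ^N), and additionally v ∈ L^{3N/(N-1)}(ℝ^N) in case N ≥ 7. Then v = 0 identically on ℝ^N and ρ is a constant function on ℝ^N. -/

import Mathlib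

open MeasureTheory Real Filter

noncomputable section
/-- Partial derivative `∂ⱼ f (x)` of a scalar function on `ℝ^N`. -/
def pd (N : ℕ) (f : EuclideanSpace ℝ (Fin N) → ℝ) (j : Fin N)
    (x : EuclideanSpace ℝ (Fin N)) : ℝ :=
  fderiv ℝ f x (EuclideanSpace.single j 1)

/-- Divergence of a vector field on `ℝ^N`. -/
def divV (N : ℕ) (v : EuclideanSpace ℝ (Fin N) → EuclideanSpace ℝ (Fin N))
    (x : EuclideanSpace ℝ (Fin N)) : ℝ :=
  ∑ j, pd N (fun y => v y j) j x

/-- Laplacian of a scalar function on `ℝ^N`. -/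
def lap (N : ℕ) (f : EuclideanSpace ℝ (Fin N) → ℝ)
    (x : EuclideanSpace ℝ (Fin N)) : ℝ :=
  ∑ j, pd N (pd N f j) j x


abbrev Eu (N : ℕ) := EuclideanSpace ℝ (Fin N)

lemma exists_cutoff (N : ℕ) : ∃ C : ℝ, 0 ≤ C ∧ ∃ σ : ℕ → Eu N → ℝ,
    (∀ n, ContDiff ℝ (⊤ : ℕ∞) (σ n)) ∧ (∀ n, HasCompactSupport (σ n)) ∧
    (∀ n x, 0 ≤ σ n x) ∧ (∀ n x, σ n x ≤ 1) ∧
    (∀ n x, ‖fderiv ℝ (σ n) x‖ ≤ C / ((n : ℝ) + 1)) ∧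
    (∀ (n : ℕ) x, ‖x‖ ≤ (n : ℝ) + 1 → σ n x = 1) ∧
    (∀ (n : ℕ) x, ‖x‖ < (n : ℝ) + 1 → fderiv ℝ (σ n) x = 0) ∧
    (∀ (n : ℕ) x, 2 * ((n : ℝ) + 1) < ‖x‖ → fderiv ℝ (σ n) x = 0) := by
  let χ : ContDiffBump (0 : Eu N) := ⟨1, 2, one_pos, one_lt_two⟩
  have hχ : ContDiff ℝ (⊤ : ℕ∞) (χ : Eu N → ℝ) := χ.contDiff
  have hcs : HasCompactSupport (χ : Eu N → ℝ) := χ.hasCompactSupport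
  obtain ⟨C, hC⟩ := (hχ.continuous_fderiv (by simp)).bounded_above_of_compact_support
    (hcs.fderiv (𝕜 := ℝ))
  have hC0 : 0 ≤ C := (norm_nonneg _).trans (hC 0)
  have hn0 : ∀ n : ℕ, (0 : ℝ) < (n : ℝ) + 1 := fun n => by positivity
  have hf : ∀ (n : ℕ) (x : Eu N), fderiv ℝ (fun y : Eu N => χ (((n : ℝ) + 1)⁻¹ • y)) x
      = ((n : ℝ) + 1)⁻¹ • fderiv ℝ χ (((n : ℝ) + 1)⁻¹ • x) := by
    intro n x
    exact fderiv_comp_smul (f := (χ : Eu N → ℝ)) _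
  have hnorm : ∀ (n : ℕ) (x : Eu N), ‖((n : ℝ) + 1)⁻¹ • x‖ = ‖x‖ / ((n : ℝ) + 1) := by
    intro n x
    rw [norm_smul, norm_inv, Real.norm_of_nonneg (hn0 n).le, div_eq_inv_mul]
  refine ⟨C, hC0, fun n x => χ (((n : ℝ) + 1)⁻¹ • x), ?_, ?_, ?_, ?_, ?_, ?_, ?_, ?_⟩
  · intro n
    exact hχ.comp (contDiff_const_smul _)
  · intro n
    exact hcs.comp_smul (inv_ne_zero (hn0 n).ne')
  · intro n x; exact χ.nonneg
  · intro n x; exact χ.le_one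
  · intro n x
    rw [hf, norm_smul, norm_inv, Real.norm_of_nonneg (hn0 n).le, div_eq_inv_mul]
    exact mul_le_mul_of_nonneg_left (hC _) (inv_nonneg.2 (hn0 n).le)
  · intro n x hx
    apply χ.one_of_mem_closedBall
    rw [mem_closedBall_zero_iff, hnorm]
    exact (div_le_one (hn0 n)).2 hx
  · intro n x hx
    rw [hf]
    have : (χ : Eu N → ℝ) =ᶠ[nhds (((n : ℝ) + 1)⁻¹ • x)] 1 := by
      apply χ.eventuallyEq_one_of_mem_ball
      rw [mem_ball_zero_iff, hnorm]
      exact (div_lt_one (hn0 n)).2 hx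
    rw [this.fderiv_eq]
    simp
  · intro n x hx
    rw [hf]
    have : fderiv ℝ χ (((n : ℝ) + 1)⁻¹ • x) = 0 := by
      apply fderiv_of_notMem_tsupport
      rw [χ.tsupport_eq, mem_closedBall_zero_iff, hnorm, not_le]
      exact (lt_div_iff₀ (hn0 n)).2 hx
    rw [this, smul_zero]

lemma fderiv_cut_bound {N : ℕ} {σ u : Eu N → ℝ} (hσ : ContDiff ℝ 1 σ) (hu : ContDiff ℝ 1 u)
    {c : ℝ} (h0 : ∀ x, 0 ≤ σ x) (h1 : ∀ x, σ x ≤ 1) (hc : ∀ x, ‖fderiv ℝ σ x‖ ≤ c) :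
    eLpNorm (fderiv ℝ (fun x => σ x * u x)) 2 volume ≤
      eLpNorm (fderiv ℝ u) 2 volume + ENNReal.ofReal c * eLpNorm u 2 volume := by
  have hc0 : 0 ≤ c := (norm_nonneg _).trans (hc 0)
  have hfe : fderiv ℝ (fun x => σ x * u x) =
      (fun x => σ x • fderiv ℝ u x) + (fun x => u x • fderiv ℝ σ x) := by
    funext x
    exact fderiv_fun_mul (hσ.differentiable (by simp) x) (hu.differentiable (by simp) x)
  have c1 := hu.continuous_fderiv (by simp)
  have c2 := hσ.continuous_fderiv (by simp)
  rw [hfe]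
  refine (eLpNorm_add_le (hσ.continuous.smul c1).aestronglyMeasurable
    (hu.continuous.smul c2).aestronglyMeasurable (by norm_num)).trans ?_
  gcongr
  · refine eLpNorm_mono fun x => ?_
    change ‖σ x • fderiv ℝ u x‖ ≤ _
    rw [norm_smul, Real.norm_of_nonneg (h0 x)]
    exact mul_le_of_le_one_left (norm_nonneg _) (h1 x)
  · refine eLpNorm_le_mul_eLpNorm_of_ae_le_mul (.of_forall fun x => ?_) 2
    change ‖u x • fderiv ℝ σ x‖ ≤ _
    rw [norm_smul, mul_comm]
    exact mul_le_mul_of_nonneg_right (hc x) (norm_nonneg _)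

lemma cut_tendsto {N : ℕ} {σ : ℕ → Eu N → ℝ} (u : Eu N → ℝ)
    (h : ∀ (n : ℕ) x, ‖x‖ ≤ (n : ℝ) + 1 → σ n x = 1) (x : Eu N) :
    Tendsto (fun n => σ n x * u x) atTop (nhds (u x)) := by
  apply tendsto_const_nhds.congr'
  filter_upwards [eventually_ge_atTop ⌈‖x‖⌉₊] with n hn
  rw [h n x, one_mul]
  have := Nat.ceil_le.1 hn
  linarith

lemma sobolev1 {N : ℕ} (hN : 0 < N) {p' : NNReal}
    (hp' : (p' : ℝ)⁻¹ = 2⁻¹ - (N : ℝ)⁻¹) : ∃ K : NNReal, ∀ u : Eu N → ℝ, ContDiff ℝ 1 u →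
    MemLp u 2 volume → MemLp (fderiv ℝ u) 2 volume →
    eLpNorm u p' volume ≤ K * eLpNorm (fderiv ℝ u) 2 volume := by
  refine ⟨eLpNormLESNormFDerivOfEqInnerConst (volume : Measure (Eu N)) (2 : NNReal), fun u hu hu2 hdu => ?_⟩
  obtain ⟨C, hC, σ, s1, s2, s3, s4, s5, s6, s7, s8⟩ := exists_cutoff N
  have s1' : ∀ n, ContDiff ℝ 1 (σ n) := fun n => (s1 n).of_le (by simp)
  have hb : ∀ n : ℕ, eLpNorm (fun x => σ n x * u x) p' volume ≤
      eLpNormLESNormFDerivOfEqInnerConst (volume : Measure (Eu N)) (2 : NNReal) *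
      (eLpNorm (fderiv ℝ u) 2 volume
        + ENNReal.ofReal (C / ((n : ℝ) + 1)) * eLpNorm u 2 volume) := by
    intro n
    have := eLpNorm_le_eLpNorm_fderiv_of_eq_inner (volume : Measure (Eu N))
      (u := fun x => σ n x * u x) ((s1' n).mul hu) ((s2 n).mul_right) (p := 2) (p' := p')
      (by norm_num) (by simpa using hN) (by simpa using hp')
    refine this.trans ?_
    gcongr
    exact fderiv_cut_bound (s1' n) hu (s3 n) (s4 n) (s5 n)
  have ht : Tendsto (fun n : ℕ => (eLpNormLESNormFDerivOfEqInnerConst (volume : Measure (Eu N)) (2 : NNReal) : ENNReal) *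
      (eLpNorm (fderiv ℝ u) 2 volume
        + ENNReal.ofReal (C / ((n : ℝ) + 1)) * eLpNorm u 2 volume)) atTop
      (nhds ((eLpNormLESNormFDerivOfEqInnerConst (volume : Measure (Eu N)) (2 : NNReal) : ENNReal) *
      (eLpNorm (fderiv ℝ u) 2 volume + ENNReal.ofReal 0 * eLpNorm u 2 volume))) := by
    refine ENNReal.Tendsto.const_mul ?_ (Or.inr ENNReal.coe_ne_top)
    refine tendsto_const_nhds.add ?_
    refine ENNReal.Tendsto.mul_const ?_ (Or.inr hu2.eLpNorm_ne_top)
    refine ENNReal.tendsto_ofReal ?_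
    exact tendsto_const_nhds.div_atTop (tendsto_atTop_add_const_right _ _ tendsto_natCast_atTop_atTop)
  have hF := Lp.eLpNorm_lim_le_liminf_eLpNorm (μ := (volume : Measure (Eu N))) (p := p')
    (f := fun n x => σ n x * u x)
    (fun n => ((s1' n).continuous.mul hu.continuous).aestronglyMeasurable) u
    (.of_forall (cut_tendsto u s6))
  refine hF.trans ?_
  have := liminf_le_liminf (f := atTop) (.of_forall hb)
  rw [ht.liminf_eq] at this
  simpa using this

lemma arctan_tendsto (s : ℝ) :
    Tendsto (fun n : ℕ => ((n : ℝ) + 1) * arctan (s / ((n : ℝ) + 1))) atTop (nhds s) := by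
  have h0 : HasDerivAt (fun t : ℝ => arctan (t * s)) s 0 := by
    have : HasDerivAt (fun t : ℝ => t * s) s 0 := by simpa using (hasDerivAt_id (0:ℝ)).mul_const s
    simpa using this.arctan
  have h1 := h0.tendsto_slope_zero_right
  have h2 : Tendsto (fun n : ℕ => ((n : ℝ) + 1)⁻¹) atTop (nhdsWithin 0 (Set.Ioi 0)) := by
    refine tendsto_inv_atTop_nhdsGT_zero.comp ?_
    exact tendsto_atTop_add_const_right _ _ tendsto_natCast_atTop_atTop
  have h3 := h1.comp h2
  refine h3.congr fun n => ?_
  simp [div_eq_inv_mul]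

lemma abs_arctan_le (s : ℝ) : |arctan s| ≤ |s| := by
  have := Convex.norm_image_sub_le_of_norm_deriv_le (f := arctan) (C := 1) (s := Set.univ)
    (x := 0) (y := s) (fun x _ => differentiable_arctan x) (fun x _ => by
      rw [Real.deriv_arctan, Real.norm_of_nonneg (by positivity)]
      rw [div_le_one (by positivity)]
      nlinarith [sq_nonneg x]) convex_univ (by simp) (by simp)
  simpa using this

lemma sobolev2 {N : ℕ} (hN : 0 < N) {p' : NNReal}
    (hp' : (p' : ℝ)⁻¹ = 2⁻¹ - (N : ℝ)⁻¹) (u : Eu N → ℝ) (hu : ContDiff ℝ 1 u)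
    {q : ℝ} (hq : q ≤ 2) (hq0 : 0 < q)
    (huq : Integrable (fun x => |u x| ^ q)) (hdu : MemLp (fderiv ℝ u) 2 volume) :
    MemLp u p' volume := by
  obtain ⟨K, hK⟩ := sobolev1 hN hp'
  have hn0 : ∀ n : ℕ, (0 : ℝ) < (n : ℝ) + 1 := fun n => by positivity
  set w : ℕ → Eu N → ℝ := fun n x => ((n : ℝ) + 1) * arctan (u x / ((n : ℝ) + 1)) with hw
  have hwd : ∀ n, ContDiff ℝ 1 (w n) := by
    intro n
    exact contDiff_const.mul (hu.div_const _).arctan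
  have hfd : ∀ n x, ‖fderiv ℝ (w n) x‖ ≤ ‖fderiv ℝ u x‖ := by
    intro n x
    have h1 : HasFDerivAt (fun y => u y * ((n : ℝ) + 1)⁻¹) (((n : ℝ) + 1)⁻¹ • fderiv ℝ u x) x :=
      (hu.differentiable (by simp) x).hasFDerivAt.mul_const _
    have h2 := (h1.arctan).const_mul ((n : ℝ) + 1)
    have h3 : w n = fun y => ((n : ℝ) + 1) * arctan (u y * ((n : ℝ) + 1)⁻¹) := by
      simp only [hw, div_eq_mul_inv]
    rw [h3, h2.fderiv, smul_smul, smul_smul, norm_smul]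
    refine mul_le_of_le_one_left (norm_nonneg _) ?_
    have : ((n:ℝ)+1) * (1 / (1 + (u x * ((n:ℝ)+1)⁻¹)^2)) * ((n:ℝ)+1)⁻¹
        = 1 / (1 + (u x * ((n:ℝ)+1)⁻¹)^2) := by
      have := (hn0 n).ne'
      rw [mul_comm, ← mul_assoc, inv_mul_cancel₀ this, one_mul]
    rw [Real.norm_eq_abs]
    rw [this]
    rw [abs_of_nonneg (by positivity), div_le_one (by positivity)]
    nlinarith [sq_nonneg (u x * ((n:ℝ)+1)⁻¹)]
  have hwu : ∀ n x, |w n x| ≤ |u x| := by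
    intro n x
    simp only [hw]
    rw [abs_mul, abs_of_pos (hn0 n)]
    calc ((n:ℝ)+1) * |arctan (u x / ((n:ℝ)+1))| ≤ ((n:ℝ)+1) * |u x / ((n:ℝ)+1)| := by
          exact mul_le_mul_of_nonneg_left (abs_arctan_le _) (hn0 n).le
      _ = |u x| := by
          rw [abs_div, abs_of_pos (hn0 n), mul_div_cancel₀ _ (hn0 n).ne']
  have hwb : ∀ n x, |w n x| ≤ ((n : ℝ) + 1) * 2 := by
    intro n x
    simp only [hw]
    rw [abs_mul, abs_of_pos (hn0 n)]
    gcongr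
    have h1 := Real.arctan_lt_pi_div_two (u x / ((n:ℝ)+1))
    have h2 := Real.neg_pi_div_two_lt_arctan (u x / ((n:ℝ)+1))
    have := Real.pi_lt_four
    exact abs_le.2 ⟨by linarith, by linarith⟩
  have hw2 : ∀ n, MemLp (w n) 2 volume := by
    intro n
    rw [memLp_two_iff_integrable_sq (hwd n).continuous.aestronglyMeasurable]
    refine (huq.const_mul ((((n:ℝ)+1)*2)^(2-q))).mono'
      ((hwd n).continuous.pow 2).aestronglyMeasurable (.of_forall fun x => ?_)
    rw [Real.norm_of_nonneg (sq_nonneg _), ← sq_abs]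
    rcases (abs_nonneg (w n x)).eq_or_lt with h | h
    · rw [← h]
      have := hn0 n
      have : 0 ≤ (((n:ℝ)+1)*2)^(2-q) * |u x| ^ q := by positivity
      simpa using this
    · calc |w n x|^2 = |w n x|^((2-q)+q) := by
            rw [← Real.rpow_natCast]; norm_num
        _ = |w n x|^(2-q) * |w n x|^q := Real.rpow_add h _ _
        _ ≤ _ := by
          exact mul_le_mul (Real.rpow_le_rpow h.le (hwb n x) (by linarith))
            (Real.rpow_le_rpow h.le (hwu n x) hq0.le) (by positivity)
            (Real.rpow_nonneg (by have := hn0 n; positivity) _)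
  have hdw : ∀ n, MemLp (fderiv ℝ (w n)) 2 volume := fun n =>
    hdu.mono ((hwd n).continuous_fderiv (by simp)).aestronglyMeasurable (.of_forall (hfd n))
  have hb : ∀ n, eLpNorm (w n) p' volume ≤ K * eLpNorm (fderiv ℝ u) 2 volume := by
    intro n
    refine (hK (w n) (hwd n) (hw2 n) (hdw n)).trans ?_
    gcongr
    exact eLpNorm_mono (hfd n)
  refine ⟨hu.continuous.aestronglyMeasurable, ?_⟩
  have hF := Lp.eLpNorm_lim_le_liminf_eLpNorm (μ := (volume : Measure (Eu N))) (p := p')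
    (f := w) (fun n => (hwd n).continuous.aestronglyMeasurable) u
    (.of_forall fun x => arctan_tendsto (u x))
  have := liminf_le_liminf (f := atTop) (.of_forall hb)
  rw [liminf_const] at this
  exact (hF.trans this).trans_lt (ENNReal.mul_lt_top ENNReal.coe_lt_top hdu.eLpNorm_lt_top)

lemma sobolev_dim2 (u : Eu 2 → ℝ) (hu : ContDiff ℝ 1 u)
    (hu2 : MemLp u 2 volume) (hdu : MemLp (fderiv ℝ u) 2 volume) :
    Integrable (fun x => |u x| ^ (4 : ℝ)) := by
  obtain ⟨C, hC, σ, s1, s2, s3, s4, s5, s6, s7, s8⟩ := exists_cutoff 2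
  have s1' : ∀ n, ContDiff ℝ 1 (σ n) := fun n => (s1 n).of_le (by simp)
  set K := eLpNormLESNormFDerivOneConst (volume : Measure (Eu 2)) (2 : NNReal)
  set B : ENNReal := K * (2 * eLpNorm u 2 volume * 
    (eLpNorm (fderiv ℝ u) 2 volume + ENNReal.ofReal C * eLpNorm u 2 volume)) with hB
  have hb : ∀ n : ℕ, eLpNorm (fun x => (σ n x * u x)^2) 2 volume ≤ B := by
    intro n
    set g : Eu 2 → ℝ := fun x => σ n x * u x with hg
    have hgd : ContDiff ℝ 1 g := (s1' n).mul hu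
    have hgc : HasCompactSupport g := (s2 n).mul_right
    have h1 := eLpNorm_le_eLpNorm_fderiv_one (volume : Measure (Eu 2))
      (u := fun x => g x ^ 2) (hgd.pow 2) (by
        have := hgc.mul_right (f' := g)
        simpa [pow_two] using! this) (p := 2) (by
        have : (Module.finrank ℝ (Eu 2) : NNReal) = 2 := by simp
        rw [this]
        refine (NNReal.holderConjugate_iff (p := 2) (q := 2)).2 ⟨by norm_num, ?_⟩
        rw [← NNReal.coe_inj]; push_cast; norm_num)
    refine h1.trans ?_
    rw [hB]
    gcongr
    have h2 : fderiv ℝ (fun x => g x ^ 2) = (fun x => 2 * g x) • (fderiv ℝ g) := by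
      funext x
      rw [fderiv_fun_pow 2 (hgd.differentiable (by simp) x)]
      simp
    rw [h2]
    refine (eLpNorm_smul_le_mul_eLpNorm (p := 2) (q := 2)
      (hgd.continuous_fderiv (by simp)).aestronglyMeasurable
      (continuous_const.mul hgd.continuous).aestronglyMeasurable).trans ?_
    gcongr
    · have := eLpNorm_le_mul_eLpNorm_of_ae_le_mul (μ := volume) (f := fun x => 2 * g x)
        (g := u) (c := 2) (.of_forall fun x => ?_) 2
      · have h3 : eLpNorm (fun x => 2 * g x) 2 volume ≤ 2 * eLpNorm u 2 volume := by
          simpa using this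
        exact h3
      · simp only [hg, norm_mul, Real.norm_ofNat]
        gcongr
        rw [Real.norm_of_nonneg (s3 n x)]
        exact mul_le_of_le_one_left (norm_nonneg _) (s4 n x)
    · refine (fderiv_cut_bound (s1' n) hu (s3 n) (s4 n) (s5 n)).trans ?_
      gcongr
      apply div_le_self hC
      have : (0:ℝ) ≤ n := n.cast_nonneg
      linarith
  have hF := Lp.eLpNorm_lim_le_liminf_eLpNorm (μ := (volume : Measure (Eu 2))) (p := 2)
    (f := fun n x => (σ n x * u x)^2)
    (fun n => (((s1' n).continuous.mul hu.continuous).pow 2).aestronglyMeasurable)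
    (fun x => u x ^ 2) (.of_forall fun x => (cut_tendsto u s6 x).pow 2)
  have h3 := liminf_le_liminf (f := atTop) (.of_forall hb)
  rw [liminf_const] at h3
  have hBt : B < ⊤ := by
    have a1 := hu2.eLpNorm_lt_top
    have a2 := hdu.eLpNorm_lt_top
    exact ENNReal.mul_lt_top ENNReal.coe_lt_top (ENNReal.mul_lt_top
      (ENNReal.mul_lt_top (by simp) a1) (ENNReal.add_lt_top.2 ⟨a2,
        ENNReal.mul_lt_top ENNReal.ofReal_lt_top a1⟩))
  have h4 : MemLp (fun x => u x ^ 2) 2 volume :=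
    ⟨(hu.continuous.pow 2).aestronglyMeasurable, (hF.trans h3).trans_lt hBt⟩
  refine h4.integrable_sq.congr (.of_forall fun x => ?_)
  have : (4 : ℝ) = ((4 : ℕ) : ℝ) := by norm_num
  simp only [this, Real.rpow_natCast, ← pow_mul]
  exact (Even.pow_abs (by decide) _).symm

lemma holder_tail {N : ℕ} (hN : 2 ≤ N) {σ : ℕ → Eu N → ℝ} {C : ℝ} (hC : 0 ≤ C)
    (s1 : ∀ n, ContDiff ℝ (⊤ : ℕ∞) (σ n)) (s2 : ∀ n, HasCompactSupport (σ n))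
    (s5 : ∀ (n : ℕ) x, ‖fderiv ℝ (σ n) x‖ ≤ C / ((n : ℝ) + 1))
    (s7 : ∀ (n : ℕ) x, ‖x‖ < (n : ℝ) + 1 → fderiv ℝ (σ n) x = 0)
    (s8 : ∀ (n : ℕ) x, 2 * ((n : ℝ) + 1) < ‖x‖ → fderiv ℝ (σ n) x = 0)
    {v : Eu N → Eu N} (hv : Continuous v)
    (hvL : Integrable (fun x => ‖v x‖ ^ ((N : ℝ) / ((N : ℝ) - 1)))) :
    Tendsto (fun n => ∫ x, ‖fderiv ℝ (σ n) x‖ * ‖v x‖) atTop (nhds 0) := by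
  have hN' : (2 : ℝ) ≤ N := by exact_mod_cast hN
  have hN1 : (0 : ℝ) < (N : ℝ) - 1 := by linarith
  set q : ℝ := (N : ℝ) / ((N : ℝ) - 1) with hq
  have hq0 : 0 < q := by positivity
  have hconj : (N : ℝ).HolderConjugate q := by
    rw [Real.holderConjugate_iff]
    refine ⟨by linarith, ?_⟩
    rw [hq]
    field_simp
    ring
  have hn0 : ∀ n : ℕ, (0 : ℝ) < (n : ℝ) + 1 := fun n => by positivity
  have cσ : ∀ n, Continuous (fderiv ℝ (σ n)) := fun n => (s1 n).continuous_fderiv (by simp)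
  set S : ℕ → Set (Eu N) := fun n => {x | (n : ℝ) + 1 ≤ ‖x‖} with hS
  have hSm : ∀ n, MeasurableSet (S n) := fun n =>
    (isClosed_le continuous_const continuous_norm).measurableSet
  set g : ℕ → Eu N → ℝ := fun n => (S n).indicator (fun x => ‖v x‖) with hg
  have hg0 : ∀ n x, 0 ≤ g n x := fun n x => Set.indicator_nonneg (fun _ _ => norm_nonneg _) x
  have hgv : ∀ n x, g n x ≤ ‖v x‖ := fun n x =>
    Set.indicator_le_self' (fun _ _ => norm_nonneg _) x
  have heq : ∀ n x, ‖fderiv ℝ (σ n) x‖ * ‖v x‖ = ‖fderiv ℝ (σ n) x‖ * g n x := by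
    intro n x
    by_cases hx : x ∈ S n
    · simp [hg, hx]
    · rw [s7 n x (not_le.1 hx)]; simp
  have hgm : ∀ n, AEStronglyMeasurable (g n) volume := fun n =>
    hv.norm.aestronglyMeasurable.indicator (hSm n)
  have hqE : ENNReal.ofReal q ≠ 0 := by simpa using hq0
  have hvM : MemLp (fun x => ‖v x‖) (ENNReal.ofReal q) volume := by
    rw [← integrable_norm_rpow_iff hv.norm.aestronglyMeasurable hqE ENNReal.ofReal_ne_top]
    simpa [ENNReal.toReal_ofReal hq0.le] using hvL
  have hgM : ∀ n, MemLp (g n) (ENNReal.ofReal q) volume := fun n => hvM.indicator (hSm n)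
  have hsM : ∀ n, MemLp (fun x => ‖fderiv ℝ (σ n) x‖) (ENNReal.ofReal (N : ℝ)) volume := fun n =>
    (cσ n).norm.memLp_of_hasCompactSupport ((s2 n).fderiv (𝕜 := ℝ)).norm
  have hH : ∀ n, ∫ x, ‖fderiv ℝ (σ n) x‖ * ‖v x‖ ≤
      (∫ x, ‖fderiv ℝ (σ n) x‖ ^ (N : ℝ)) ^ (1 / (N : ℝ)) * (∫ x, g n x ^ q) ^ (1 / q) := by
    intro n
    simp_rw [heq]
    exact integral_mul_le_Lp_mul_Lq_of_nonneg hconj (.of_forall fun x => norm_nonneg _)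
      (.of_forall (hg0 n)) (hsM n) (hgM n)
  set B : ℝ := (2 * C) ^ N * volume.real (Metric.closedBall (0 : Eu N) 1) with hB
  have hbd : ∀ n, ∫ x, ‖fderiv ℝ (σ n) x‖ ^ (N : ℝ) ≤ B := by
    intro n
    have h1 : ∫ x, ‖fderiv ℝ (σ n) x‖ ^ (N : ℝ) ≤
        ∫ x, (Metric.closedBall (0 : Eu N) (2 * ((n : ℝ) + 1))).indicator
          (fun _ => (C / ((n : ℝ) + 1)) ^ N) x := by
      refine integral_mono_of_nonneg (.of_forall fun x => by positivity) ?_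
        (.of_forall fun x => ?_)
      · rw [integrable_indicator_iff Metric.isClosed_closedBall.measurableSet]
        exact integrableOn_const (isCompact_closedBall _ _).measure_lt_top.ne
      · by_cases hx : x ∈ Metric.closedBall (0 : Eu N) (2 * ((n : ℝ) + 1))
        · simp only [hx, Set.indicator_of_mem, Real.rpow_natCast]
          exact pow_le_pow_left₀ (norm_nonneg _) (s5 n x) N
        · have : 2 * ((n : ℝ) + 1) < ‖x‖ := by simpa using hx
          simp only [hx, Set.indicator_of_notMem, not_false_eq_true, s8 n x this, norm_zero]
          rw [Real.zero_rpow (by linarith)]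
    refine h1.trans_eq ?_
    rw [integral_indicator Metric.isClosed_closedBall.measurableSet, setIntegral_const,
      Measure.addHaar_real_closedBall' _ _ (by have := hn0 n; positivity)]
    rw [hB, smul_eq_mul, finrank_euclideanSpace, Fintype.card_fin, div_pow, mul_pow, mul_pow]
    have := (hn0 n).ne'
    field_simp
  have ht : Tendsto (fun n => ∫ x, g n x ^ q) atTop (nhds 0) := by
    have := tendsto_integral_of_dominated_convergence (μ := (volume : Measure (Eu N)))
      (F := fun n x => g n x ^ q) (f := fun _ => 0) (fun x => ‖v x‖ ^ q)
      (fun n => ((hgm n).aemeasurable.pow_const q).aestronglyMeasurable) hvL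
      (fun n => .of_forall fun x => by
        rw [Real.norm_of_nonneg (Real.rpow_nonneg (hg0 n x) _)]
        exact Real.rpow_le_rpow (hg0 n x) (hgv n x) hq0.le)
      (.of_forall fun x => by
        apply tendsto_const_nhds.congr'
        filter_upwards [eventually_ge_atTop ⌈‖x‖⌉₊] with n hn
        have h1 := Nat.ceil_le.1 hn
        have : x ∉ S n := by
          simp only [hS, Set.mem_ofPred_eq, not_le]; linarith
        simp [hg, this, Real.zero_rpow hq0.ne'])
    simpa using this
  have hB0 : 0 ≤ B := by positivity
  have ht2 : Tendsto (fun n => B ^ (1 / (N : ℝ)) * (∫ x, g n x ^ q) ^ (1 / q)) atTop (nhds 0) := by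
    have h1 := ht.rpow_const (p := 1 / q) (Or.inr (by positivity))
    have := h1.const_mul (B ^ (1 / (N : ℝ)))
    rw [Real.zero_rpow (by positivity)] at this
    simpa using this
  refine squeeze_zero (fun n => integral_nonneg fun x => by positivity) (fun n => ?_) ht2
  refine (hH n).trans ?_
  refine mul_le_mul_of_nonneg_right ?_ (Real.rpow_nonneg (integral_nonneg fun x =>
    Real.rpow_nonneg (hg0 n x) _) _)
  exact Real.rpow_le_rpow (integral_nonneg fun x => by positivity) (hbd n) (by positivity)

lemma rpow_le_add {t a b c : ℝ} (ht : 0 ≤ t) (ha : 0 < a) (hab : a ≤ b) (hbc : b ≤ c) :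
    t ^ b ≤ t ^ a + t ^ c := by
  have h1 := Real.rpow_nonneg ht a
  have h2 := Real.rpow_nonneg ht c
  rcases le_total t 1 with h | h
  · have : t ^ b ≤ t ^ a := by
      rcases ht.eq_or_lt with h0 | h0
      · rw [← h0, Real.zero_rpow ha.ne', Real.zero_rpow (ha.trans_le hab).ne']
      · exact Real.rpow_le_rpow_of_exponent_ge h0 h hab
    linarith
  · have : t ^ b ≤ t ^ c := Real.rpow_le_rpow_of_exponent_le h hbc
    linarith

lemma integrable_interp {N : ℕ} {F : Type*} [NormedAddCommGroup F] {v : Eu N → F}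
    (hv : Continuous v) {a b c : ℝ}
    (ha : 0 < a) (hab : a ≤ b) (hbc : b ≤ c) (h1 : Integrable (fun x => ‖v x‖ ^ a))
    (h2 : Integrable (fun x => ‖v x‖ ^ c)) : Integrable (fun x => ‖v x‖ ^ b) := by
  refine (h1.add h2).mono' (hv.norm.rpow_const fun x => Or.inr
    (ha.trans_le hab).le).aestronglyMeasurable (.of_forall fun x => ?_)
  rw [Real.norm_of_nonneg (by positivity)]
  exact rpow_le_add (norm_nonneg _) ha hab hbc

lemma fderiv_norm_sq_le {N : ℕ} (u : Eu N → ℝ) (x : Eu N) :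
    ‖fderiv ℝ u x‖ ≤ ∑ j, |fderiv ℝ u x (EuclideanSpace.single j 1)| := by
  refine ContinuousLinearMap.opNorm_le_bound _ (Finset.sum_nonneg fun _ _ => abs_nonneg _) ?_
  intro y
  have hy : y = ∑ j, y j • (EuclideanSpace.single j (1 : ℝ)) := by
    ext i
    simp [Finset.sum_apply, Pi.single_apply]
  conv_lhs => rw [hy]
  rw [map_sum, Finset.sum_mul]
  refine (norm_sum_le _ _).trans (Finset.sum_le_sum fun j _ => ?_)
  rw [map_smul, smul_eq_mul, norm_mul, mul_comm]
  exact mul_le_mul_of_nonneg_left (PiLp.norm_apply_le y j) (abs_nonneg _)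

lemma memLp_comp_grad {N : ℕ} {v : Eu N → Eu N} (hv : ContDiff ℝ (⊤ : ℕ∞) v)
    (hgrad : Integrable (fun x => ∑ i, ∑ j, (pd N (fun y => v y i) j x) ^ 2)) (i : Fin N) :
    MemLp (fderiv ℝ (fun y => v y i)) 2 volume := by
  have hvi : ContDiff ℝ (⊤ : ℕ∞) (fun y => v y i) := by fun_prop
  have hc := hvi.continuous_fderiv (by simp)
  have hj : ∀ j, MemLp (fun x => |pd N (fun y => v y i) j x|) 2 volume := by
    intro j
    have hcj : Continuous (fun x => pd N (fun y => v y i) j x) := by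
      unfold pd; fun_prop
    rw [memLp_two_iff_integrable_sq hcj.abs.aestronglyMeasurable]
    refine hgrad.mono' (hcj.abs.pow 2).aestronglyMeasurable (.of_forall fun x => ?_)
    rw [Real.norm_of_nonneg (sq_nonneg _), sq_abs]
    refine (Finset.single_le_sum (f := fun j => (pd N (fun y => v y i) j x) ^ 2)
      (fun _ _ => sq_nonneg _) (Finset.mem_univ j)).trans ?_
    exact Finset.single_le_sum (f := fun i => ∑ j, (pd N (fun y => v y i) j x) ^ 2)
      (fun _ _ => Finset.sum_nonneg fun _ _ => sq_nonneg _) (Finset.mem_univ i)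
  have hs := memLp_finsetSum Finset.univ (fun j _ => hj j)
  refine hs.mono hc.aestronglyMeasurable (.of_forall fun x => ?_)
  refine (fderiv_norm_sq_le _ x).trans ?_
  exact le_abs_self _

lemma v_L3_small {N : ℕ} (hN : 2 ≤ N) (hN6 : N ≤ 6) {v : Eu N → Eu N}
    (hv : ContDiff ℝ (⊤ : ℕ∞) v)
    (hgrad : Integrable (fun x => ∑ i, ∑ j, (pd N (fun y => v y i) j x) ^ 2))
    (hvL : Integrable (fun x => ‖v x‖ ^ ((N : ℝ) / ((N : ℝ) - 1)))) :
    Integrable (fun x => ‖v x‖ ^ (3 : ℝ)) := by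
  have hN' : (2 : ℝ) ≤ N := by exact_mod_cast hN
  have hN6' : (N : ℝ) ≤ 6 := by exact_mod_cast hN6
  have hN1 : (0 : ℝ) < (N : ℝ) - 1 := by linarith
  set q : ℝ := (N : ℝ) / ((N : ℝ) - 1) with hq
  have hq0 : 0 < q := by positivity
  have hq2 : q ≤ 2 := by rw [hq, div_le_iff₀ hN1]; linarith
  have hcomp : ∀ i, Integrable (fun x => ‖v x i‖ ^ (3 : ℝ)) := by
    intro i
    have hvi : ContDiff ℝ (⊤ : ℕ∞) (fun y => v y i) := by fun_prop
    have hvi1 : ContDiff ℝ 1 (fun y => v y i) := hvi.of_le (by simp)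
    have hd := memLp_comp_grad hv hgrad i
    have hiq : Integrable (fun x => ‖v x i‖ ^ q) := by
      refine hvL.mono' (hvi.continuous.norm.rpow_const fun x => Or.inr hq0.le).aestronglyMeasurable
        (.of_forall fun x => ?_)
      rw [Real.norm_of_nonneg (by positivity)]
      exact Real.rpow_le_rpow (norm_nonneg _) (PiLp.norm_apply_le _ i) hq0.le
    rcases hN.eq_or_lt with h2 | h3
    · subst h2
      have hq' : q = 2 := by rw [hq]; norm_num
      have hm : MemLp (fun y => v y i) 2 volume := by
        rw [memLp_two_iff_integrable_sq hvi.continuous.aestronglyMeasurable]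
        refine hiq.congr (.of_forall fun x => ?_)
        simp only [hq']
        norm_num
      have h4 := sobolev_dim2 _ hvi1 hm hd
      exact integrable_interp hvi.continuous hq0 (by linarith) (by norm_num) hiq h4
    · have h3' : (3 : ℝ) ≤ N := by exact_mod_cast h3
      have hN2 : (0 : ℝ) < (N : ℝ) - 2 := by linarith
      have hp0 : (0 : ℝ) ≤ 2 * N / (N - 2) := by positivity
      set p' : NNReal := ⟨2 * N / (N - 2), hp0⟩ with hp
      have hpc : (p' : ℝ) = 2 * N / (N - 2) := rfl
      have hm : MemLp (fun y => v y i) p' volume := by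
        refine sobolev2 (by omega) ?_ _ hvi1 hq2 hq0 hiq hd
        rw [hpc]; field_simp
      have hpp : p' ≠ 0 := by
        rw [← NNReal.coe_ne_zero, hpc]; positivity
      have h4 := hm.integrable_norm_rpow (by simpa using hpp) (by simp)
      refine integrable_interp hvi.continuous hq0 (by linarith) ?_ hiq h4
      rw [ENNReal.coe_toReal, hpc, le_div_iff₀ hN2]
      linarith
  have hM : ∀ i, MemLp (fun x => v x i • (EuclideanSpace.single i (1 : ℝ))) 3 volume := by
    intro i
    have hc : Continuous (fun y => v y i) := by have := hv.continuous; fun_prop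
    have h1 : MemLp (fun x => v x i) 3 volume := by
      rw [← integrable_norm_rpow_iff hc.aestronglyMeasurable (by norm_num) (by norm_num)]
      simpa using hcomp i
    refine h1.mono (hc.smul continuous_const).aestronglyMeasurable (.of_forall fun x => ?_)
    simp [norm_smul]
  have hs := memLp_finsetSum Finset.univ (fun j _ => hM j)
  have hs2 : MemLp v 3 volume := by
    convert hs using 2 with x
    ext i
    simp [Pi.single_apply]
  simpa using hs2.integrable_norm_rpow (by norm_num) (by norm_num)

lemma pd_mul {N : ℕ} {f g : Eu N → ℝ} {x : Eu N} (hf : DifferentiableAt ℝ f x)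
    (hg : DifferentiableAt ℝ g x) (j : Fin N) :
    pd N (fun y => f y * g y) j x = f x * pd N g j x + g x * pd N f j x := by
  unfold pd
  rw [fderiv_fun_mul hf hg]
  simp

lemma pd_add {N : ℕ} {f g : Eu N → ℝ} {x : Eu N} (hf : DifferentiableAt ℝ f x)
    (hg : DifferentiableAt ℝ g x) (j : Fin N) :
    pd N (fun y => f y + g y) j x = pd N f j x + pd N g j x := by
  unfold pd
  rw [fderiv_fun_add hf hg]
  simp

lemma pd_const_mul {N : ℕ} {f : Eu N → ℝ} {x : Eu N} (c : ℝ) (hf : DifferentiableAt ℝ f x)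
    (j : Fin N) :
    pd N (fun y => c * f y) j x = c * pd N f j x := by
  unfold pd
  rw [fderiv_const_mul hf]
  simp

lemma pd_sum {N : ℕ} {f : Fin N → Eu N → ℝ} {x : Eu N}
    (hf : ∀ i, DifferentiableAt ℝ (f i) x) (j : Fin N) :
    pd N (fun y => ∑ i, f i y) j x = ∑ i, pd N (f i) j x := by
  unfold pd
  rw [fderiv_fun_sum fun i _ => hf i]
  simp

lemma pd_rpow {N : ℕ} {f : Eu N → ℝ} {x : Eu N} {γ : ℝ} (hγ : 1 < γ)
    (hf : DifferentiableAt ℝ f x) (j : Fin N) :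
    pd N (fun y => f y ^ γ) j x = γ * f x ^ (γ - 1) * pd N f j x := by
  unfold pd
  rw [(hf.hasFDerivAt.rpow_const (Or.inr hγ.le)).fderiv]
  simp

/-- The energy flux. -/
def flux (N : ℕ) (μ lam a γ : ℝ) (ρ : Eu N → ℝ) (v : Eu N → Eu N) (j : Fin N) (y : Eu N) : ℝ :=
  (-1 / 2) * ((ρ y * v y j) * ∑ i, v y i * v y i)
    + ((-(a * γ / (γ - 1))) * (ρ y ^ γ * v y j)
    + (μ * ∑ i, v y i * pd N (fun z => v z i) j y
    + (μ + lam) * (v y j * divV N v y)))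

lemma contDiff_pd {N : ℕ} {f : Eu N → ℝ} (hf : ContDiff ℝ (⊤ : ℕ∞) f) (j : Fin N) :
    ContDiff ℝ (⊤ : ℕ∞) (pd N f j) := by
  have h : ContDiff ℝ (⊤ : ℕ∞) (fderiv ℝ f) := hf.fderiv_right (by simp)
  exact h.clm_apply contDiff_const

lemma contDiff_divV {N : ℕ} {v : Eu N → Eu N} (hv : ContDiff ℝ (⊤ : ℕ∞) v) :
    ContDiff ℝ (⊤ : ℕ∞) (divV N v) := by
  have : ∀ j, ContDiff ℝ (⊤ : ℕ∞) (pd N (fun y => v y j) j) := fun j =>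
    contDiff_pd (by fun_prop) j
  exact ContDiff.sum fun j _ => this j

lemma contDiff_flux {N : ℕ} {μ lam a γ : ℝ} (hγ : 1 < γ) {ρ : Eu N → ℝ} {v : Eu N → Eu N}
    (hρ : ContDiff ℝ (⊤ : ℕ∞) ρ) (hv : ContDiff ℝ (⊤ : ℕ∞) v) (j : Fin N) :
    ContDiff ℝ 1 (flux N μ lam a γ ρ v j) := by
  have hρ1 : ContDiff ℝ 1 ρ := hρ.of_le (by simp)
  have hv1 : ∀ i, ContDiff ℝ 1 (fun y => v y i) := fun i => by
    have : ContDiff ℝ 1 v := hv.of_le (by simp)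
    fun_prop
  have hA : ∀ i, ContDiff ℝ 1 (pd N (fun z => v z i) j) := fun i =>
    (contDiff_pd (by fun_prop) j).of_le (by simp)
  have hd : ContDiff ℝ 1 (divV N v) := (contDiff_divV hv).of_le (by simp)
  have hr : ContDiff ℝ 1 (fun y => ρ y ^ γ) :=
    (Real.contDiff_rpow_const_of_le (n := 1) (by simpa using hγ.le)).comp hρ1
  unfold flux
  exact (contDiff_const.mul ((hρ1.mul (hv1 j)).mul (ContDiff.sum fun i _ => (hv1 i).mul (hv1 i)))).add
    ((contDiff_const.mul (hr.mul (hv1 j))).add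
      ((contDiff_const.mul (ContDiff.sum fun i _ => (hv1 i).mul (hA i))).add
        (contDiff_const.mul ((hv1 j).mul hd))))

lemma div_flux {N : ℕ} {μ lam a γ : ℝ} (hγ : 1 < γ) {ρ : Eu N → ℝ} {v : Eu N → Eu N}
    (hρ : ContDiff ℝ (⊤ : ℕ∞) ρ) (hv : ContDiff ℝ (⊤ : ℕ∞) v) (hρnn : ∀ x, 0 ≤ ρ x)
    (hcont : ∀ x, ∑ j, pd N (fun y => ρ y * v y j) j x = 0)
    (hmom : ∀ x, ∀ i : Fin N,
      ∑ j, pd N (fun y => ρ y * v y j * v y i) j x =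
        - pd N (fun y => a * ρ y ^ γ) i x
          + μ * lap N (fun y => v y i) x + (μ + lam) * pd N (divV N v) i x) (x : Eu N) :
    ∑ j, pd N (flux N μ lam a γ ρ v j) j x =
      μ * (∑ i, ∑ j, (pd N (fun y => v y i) j x) ^ 2) + (μ + lam) * (divV N v x) ^ 2 := by
  have dρ : DifferentiableAt ℝ ρ x := hρ.differentiable (by simp) x
  have dv : ∀ i, DifferentiableAt ℝ (fun y => v y i) x := fun i => by
    have := hv.differentiable (by simp) x
    fun_prop
  have dA : ∀ i j, DifferentiableAt ℝ (pd N (fun z => v z i) j) x := fun i j =>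
    (contDiff_pd (by fun_prop) j).differentiable (by simp) x
  have dd : DifferentiableAt ℝ (divV N v) x := (contDiff_divV hv).differentiable (by simp) x
  have dr : DifferentiableAt ℝ (fun y => ρ y ^ γ) x :=
    (dρ.hasFDerivAt.rpow_const (Or.inr hγ.le)).differentiableAt
  have dm : ∀ j, DifferentiableAt ℝ (fun y => ρ y * v y j) x := fun j => dρ.mul (dv j)
  have dS : DifferentiableAt ℝ (fun y => ∑ i, v y i * v y i) x :=
    DifferentiableAt.fun_sum fun i _ => (dv i).mul (dv i)
  have dT : ∀ j, DifferentiableAt ℝ (fun y => ∑ i, v y i * pd N (fun z => v z i) j y) x := fun j =>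
    DifferentiableAt.fun_sum fun i _ => (dv i).mul (dA i j)
  have hr1 : ρ x ^ (γ - 1) * ρ x = ρ x ^ γ := by
    rcases (hρnn x).eq_or_lt with h | h
    · rw [← h, mul_zero, Real.zero_rpow (by linarith)]
    · rw [← Real.rpow_add_one h.ne']; congr 1; ring
  have hflux : ∀ j, pd N (flux N μ lam a γ ρ v j) j x =
      (-1 / 2) * (∑ i, v x i * v x i) * pd N (fun y => ρ y * v y j) j x
      - (∑ i, v x i * (ρ x * v x j * pd N (fun y => v y i) j x))
      - (a * γ / (γ - 1)) * (ρ x ^ γ * pd N (fun y => v y j) j x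
          + γ * ρ x ^ (γ - 1) * (v x j * pd N ρ j x))
      + μ * ((∑ i, v x i * pd N (pd N (fun z => v z i) j) j x)
          + ∑ i, (pd N (fun y => v y i) j x) ^ 2)
      + (μ + lam) * (v x j * pd N (divV N v) j x + divV N v x * pd N (fun y => v y j) j x) := by
    intro j
    unfold flux
    have d1 := (dm j).fun_mul dS
    have d2 := dr.fun_mul (dv j)
    have d4 := (dv j).fun_mul dd
    have d1' := d1.const_mul (-1 / 2)
    have d2' := d2.const_mul (-(a * γ / (γ - 1)))
    have d3' := (dT j).const_mul μ
    have d4' := d4.const_mul (μ + lam)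
    rw [pd_add d1' (d2'.fun_add (d3'.fun_add d4')), pd_add d2' (d3'.fun_add d4'), pd_add d3' d4',
      pd_const_mul _ d1, pd_const_mul _ d2, pd_const_mul _ (dT j),
      pd_const_mul _ d4, pd_mul (dm j) dS, pd_mul dr (dv j), pd_mul (dv j) dd,
      pd_sum (fun i => (dv i).fun_mul (dv i)), pd_sum (fun i => (dv i).fun_mul (dA i j)),
      pd_rpow hγ dρ]
    have e1 : ∑ i, pd N (fun y => v y i * v y i) j x
        = ∑ i, 2 * (v x i * pd N (fun y => v y i) j x) :=
      Finset.sum_congr rfl fun i _ => by rw [pd_mul (dv i) (dv i)]; ring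
    have e2 : ∑ i, pd N (fun y => v y i * pd N (fun z => v z i) j y) j x
        = ∑ i, (v x i * pd N (pd N (fun z => v z i) j) j x + (pd N (fun y => v y i) j x) ^ 2) :=
      Finset.sum_congr rfl fun i _ => by rw [pd_mul (dv i) (dA i j)]; ring
    have e3 : ∑ i, v x i * (ρ x * v x j * pd N (fun y => v y i) j x)
        = ρ x * v x j * ∑ i, v x i * pd N (fun y => v y i) j x := by
      rw [Finset.mul_sum]; exact Finset.sum_congr rfl fun i _ => by ring
    rw [e1, e2, e3, ← Finset.mul_sum, Finset.sum_add_distrib]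
    ring
  have hc := hcont x
  -- transport of the density
  have hc2 : ∑ j, v x j * pd N ρ j x = - (ρ x * divV N v x) := by
    have : ∑ j, pd N (fun y => ρ y * v y j) j x
        = ρ x * divV N v x + ∑ j, v x j * pd N ρ j x := by
      unfold divV
      rw [Finset.mul_sum, ← Finset.sum_add_distrib]
      exact Finset.sum_congr rfl fun j _ => pd_mul dρ (dv j) j
    linarith
  -- momentum equation tested with `v`
  have hm1 : ∀ i, ∑ j, ρ x * v x j * pd N (fun y => v y i) j x =
      - (a * (γ * ρ x ^ (γ - 1) * pd N ρ i x))
          + μ * lap N (fun y => v y i) x + (μ + lam) * pd N (divV N v) i x := by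
    intro i
    have h1 := hmom x i
    rw [pd_const_mul _ dr, pd_rpow hγ dρ] at h1
    rw [← h1]
    have : ∀ j, pd N (fun y => ρ y * v y j * v y i) j x
        = ρ x * v x j * pd N (fun y => v y i) j x + v x i * pd N (fun y => ρ y * v y j) j x :=
      fun j => pd_mul (dm j) (dv i) j
    simp_rw [this]
    rw [Finset.sum_add_distrib, ← Finset.mul_sum, hc, mul_zero, add_zero]
  have hm2 : ∑ j, ∑ i, v x i * (ρ x * v x j * pd N (fun y => v y i) j x) =
      a * γ * ρ x ^ γ * divV N v x + μ * (∑ i, v x i * lap N (fun y => v y i) x)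
        + (μ + lam) * ∑ i, v x i * pd N (divV N v) i x := by
    rw [Finset.sum_comm]
    have : ∀ i, ∑ j, v x i * (ρ x * v x j * pd N (fun y => v y i) j x) =
        -(a * γ * ρ x ^ (γ - 1)) * (v x i * pd N ρ i x)
          + μ * (v x i * lap N (fun y => v y i) x)
          + (μ + lam) * (v x i * pd N (divV N v) i x) := by
      intro i
      rw [← Finset.mul_sum, hm1 i]; ring
    simp_rw [this]
    rw [Finset.sum_add_distrib, Finset.sum_add_distrib, ← Finset.mul_sum, ← Finset.mul_sum,
      ← Finset.mul_sum, hc2, ← hr1]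
    ring
  have hl : ∑ j, ∑ i, v x i * pd N (pd N (fun z => v z i) j) j x
      = ∑ i, v x i * lap N (fun y => v y i) x := by
    rw [Finset.sum_comm]
    unfold lap
    exact Finset.sum_congr rfl fun i _ => by rw [Finset.mul_sum]
  simp_rw [hflux]
  simp only [Finset.sum_add_distrib, Finset.sum_sub_distrib, ← Finset.mul_sum]
  rw [hc, hm2, hc2, hl, Finset.sum_comm (f := fun j i => (pd N (fun y => v y i) j x) ^ 2)]
  have hdv : ∑ j, pd N (fun y => v y j) j x = divV N v x := rfl
  rw [hdv, ← hr1]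
  have hg : γ - 1 ≠ 0 := by linarith
  field_simp
  ring

lemma abs_pd_le {N : ℕ} (f : Eu N → ℝ) (j : Fin N) (x : Eu N) :
    |pd N f j x| ≤ ‖fderiv ℝ f x‖ := by
  unfold pd
  have := (fderiv ℝ f x).le_opNorm (EuclideanSpace.single j (1 : ℝ))
  simpa using this

lemma flux_bound {N : ℕ} {μ lam a γ M : ℝ} (hμ : 0 < μ) (hlam : 0 < lam + μ) (ha : 0 < a)
    (hγ : 1 < γ) {ρ : Eu N → ℝ} {v : Eu N → Eu N} (hρnn : ∀ x, 0 ≤ ρ x) (hM : ∀ x, |ρ x| ≤ M)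
    (j : Fin N) (x : Eu N) :
    |flux N μ lam a γ ρ v j x| ≤ (a * γ / (γ - 1)) * M ^ γ * ‖v x‖ +
      (1 / 2 * M * ‖v x‖ ^ (3 : ℝ)
        + μ * (N * ‖v x‖ ^ (2 : ℝ) + ∑ i, ∑ j, (pd N (fun y => v y i) j x) ^ 2)
        + (μ + lam) * (‖v x‖ ^ (2 : ℝ) + (divV N v x) ^ 2)) := by
  have hρM : ρ x ≤ M := (le_abs_self _).trans (hM x)
  have hr0 := hρnn x
  have hg : 0 < γ - 1 := by linarith
  have hvj : ∀ i, |v x i| ≤ ‖v x‖ := fun i => PiLp.norm_apply_le (v x) i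
  have hS : ∑ i, v x i * v x i = ‖v x‖ ^ 2 := by
    rw [EuclideanSpace.real_norm_sq_eq]
    exact Finset.sum_congr rfl fun i _ => by ring
  have n3 : ‖v x‖ ^ (3 : ℝ) = ‖v x‖ ^ 3 := by
    rw [← Real.rpow_natCast]; norm_num
  have n2 : ‖v x‖ ^ (2 : ℝ) = ‖v x‖ ^ 2 := by
    rw [← Real.rpow_natCast]; norm_num
  rw [n3, n2]
  have hv0 := norm_nonneg (v x)
  have b1 : |(-1 / 2) * ((ρ x * v x j) * ∑ i, v x i * v x i)| ≤ 1 / 2 * M * ‖v x‖ ^ 3 := by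
    rw [hS, abs_mul, abs_mul, abs_mul, abs_of_nonneg hr0, abs_of_nonneg (sq_nonneg ‖v x‖)]
    have : |(-1 / 2 : ℝ)| = 1 / 2 := by norm_num [abs_div]
    rw [this]
    calc 1 / 2 * (ρ x * |v x j| * ‖v x‖ ^ 2) ≤ 1 / 2 * (M * ‖v x‖ * ‖v x‖ ^ 2) := by
          have := hvj j
          have := hr0.trans hρM
          gcongr
      _ = _ := by ring
  have b2 : |(-(a * γ / (γ - 1))) * (ρ x ^ γ * v x j)| ≤ (a * γ / (γ - 1)) * M ^ γ * ‖v x‖ := by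
    have h0 : 0 ≤ a * γ / (γ - 1) := by positivity
    rw [abs_mul, abs_neg, abs_of_nonneg h0, abs_mul, abs_of_nonneg (Real.rpow_nonneg hr0 _),
      mul_assoc]
    refine mul_le_mul_of_nonneg_left ?_ h0
    exact mul_le_mul (Real.rpow_le_rpow hr0 hρM (by linarith)) (hvj j) (abs_nonneg _)
      (Real.rpow_nonneg (hr0.trans hρM) _)
  have y : ∀ (s t : ℝ), |s| ≤ ‖v x‖ → |s * t| ≤ ‖v x‖ ^ 2 + t ^ 2 := by
    intro s t hs
    rw [abs_mul]
    have := abs_nonneg t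
    have h1 : |s| * |t| ≤ ‖v x‖ * |t| := mul_le_mul_of_nonneg_right hs this
    nlinarith [sq_nonneg (‖v x‖ - |t|), sq_abs t]
  have b3 : |μ * ∑ i, v x i * pd N (fun z => v z i) j x|
      ≤ μ * (N * ‖v x‖ ^ 2 + ∑ i, ∑ j, (pd N (fun y => v y i) j x) ^ 2) := by
    rw [abs_mul, abs_of_pos hμ]
    refine mul_le_mul_of_nonneg_left ?_ hμ.le
    refine (Finset.abs_sum_le_sum_abs _ _).trans ?_
    calc ∑ i, |v x i * pd N (fun z => v z i) j x|
        ≤ ∑ i, (‖v x‖ ^ 2 + ∑ j, (pd N (fun y => v y i) j x) ^ 2) := by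
          refine Finset.sum_le_sum fun i _ => (y _ _ (hvj i)).trans ?_
          gcongr
          exact Finset.single_le_sum (f := fun j => (pd N (fun y => v y i) j x) ^ 2)
            (fun _ _ => sq_nonneg _) (Finset.mem_univ j)
      _ = _ := by simp [Finset.sum_add_distrib]
  have b4 : |(μ + lam) * (v x j * divV N v x)| ≤ (μ + lam) * (‖v x‖ ^ 2 + (divV N v x) ^ 2) := by
    rw [abs_mul, abs_of_pos (by linarith : 0 < μ + lam)]
    exact mul_le_mul_of_nonneg_left (y _ _ (hvj j)) (by linarith)
  unfold flux
  refine (abs_add_le _ _).trans ?_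
  refine (add_le_add_right (abs_add_le _ _) _).trans ?_
  refine (add_le_add_right (add_le_add_right (abs_add_le _ _) _) _).trans ?_
  linarith

/-- Liouville type theorem for the stationary compressible Navier–Stokes
system on `ℝ^N`, `N ≥ 2`. -/
theorem liouville_NS
    (N : ℕ) (hN : 2 ≤ N)
    (μ lam a γ : ℝ)
    (hμ : 0 < μ) (hlam : 0 < lam + μ) (ha : 0 < a) (hγ : 1 < γ)
    (ρ : EuclideanSpace ℝ (Fin N) → ℝ)
    (v : EuclideanSpace ℝ (Fin N) → EuclideanSpace ℝ (Fin N))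
    (hρsm : ContDiff ℝ (⊤ : ℕ∞) ρ) (hvsm : ContDiff ℝ (⊤ : ℕ∞) v)
    (hρnn : ∀ x, 0 ≤ ρ x)
    -- continuity equation: div(ρ v) = 0
    (hcont : ∀ x, ∑ j, pd N (fun y => ρ y * v y j) j x = 0)
    -- momentum equation: div(ρ v ⊗ v) = -∇p + μ Δv + (μ+λ) ∇ div v,  p = a ρ^γ
    (hmom : ∀ x, ∀ i : Fin N,
      ∑ j, pd N (fun y => ρ y * v y j * v y i) j x =
        - pd N (fun y => a * ρ y ^ γ) i x
          + μ * lap N (fun y => v y i) x + (μ + lam) * pd N (divV N v) i x)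
    -- ρ ∈ L^∞
    (hρb : ∃ M, ∀ x, |ρ x| ≤ M)
    -- ∇v ∈ L²
    (hgrad : Integrable (fun x => ∑ i, ∑ j, (pd N (fun y => v y i) j x) ^ 2))
    -- v ∈ L^{N/(N-1)}
    (hvL : Integrable (fun x => ‖v x‖ ^ ((N : ℝ) / ((N : ℝ) - 1))))
    -- additionally v ∈ L^{3N/(N-1)} if N ≥ 7
    (hvL7 : 7 ≤ N →
      Integrable (fun x => ‖v x‖ ^ ((3 * (N : ℝ)) / ((N : ℝ) - 1)))) :
    (∀ x, v x = 0) ∧ (∃ c : ℝ, ∀ x, ρ x = c) := by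
  obtain ⟨M, hM⟩ := hρb
  have hN' : (2 : ℝ) ≤ N := by exact_mod_cast hN
  have hN1 : (0 : ℝ) < (N : ℝ) - 1 := by linarith
  have hq0 : 0 < (N : ℝ) / ((N : ℝ) - 1) := by positivity
  have hq2 : (N : ℝ) / ((N : ℝ) - 1) ≤ 2 := by rw [div_le_iff₀ hN1]; linarith
  have hv3 : Integrable (fun x => ‖v x‖ ^ (3 : ℝ)) := by
    by_cases h7 : 7 ≤ N
    · refine integrable_interp hvsm.continuous hq0 (by linarith) ?_ hvL (hvL7 h7)
      rw [le_div_iff₀ hN1]; linarith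
    · exact v_L3_small hN (by omega) hvsm hgrad hvL
  have hv2 : Integrable (fun x => ‖v x‖ ^ (2 : ℝ)) :=
    integrable_interp hvsm.continuous hq0 hq2 (by norm_num) hvL hv3
  set Q : Eu N → ℝ := fun x => ∑ i, ∑ j, (pd N (fun y => v y i) j x) ^ 2 with hQ
  have hQ0 : ∀ x, 0 ≤ Q x := fun x => Finset.sum_nonneg fun _ _ => Finset.sum_nonneg
    fun _ _ => sq_nonneg _
  have hA : ∀ i j, ContDiff ℝ (⊤ : ℕ∞) (pd N (fun z => v z i) j) := fun i j =>
    contDiff_pd (by fun_prop) j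
  have hQc : Continuous Q := continuous_finsetSum _ fun i _ => continuous_finsetSum _
    fun j _ => (hA i j).continuous.pow 2
  have hdc : Continuous (divV N v) := (contDiff_divV hvsm).continuous
  have hdQ : ∀ x, (divV N v x) ^ 2 ≤ N * Q x := by
    intro x
    unfold divV
    refine (sq_sum_le_card_mul_sum_sq).trans ?_
    rw [Finset.card_univ, Fintype.card_fin]
    refine mul_le_mul_of_nonneg_left ?_ (by positivity)
    refine Finset.sum_le_sum fun i _ => ?_
    exact Finset.single_le_sum (f := fun j => (pd N (fun y => v y i) j x) ^ 2)
      (fun _ _ => sq_nonneg _) (Finset.mem_univ i)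
  have hdi : Integrable (fun x => (divV N v x) ^ 2) := by
    refine (hgrad.const_mul (N : ℝ)).mono' (hdc.pow 2).aestronglyMeasurable
      (.of_forall fun x => ?_)
    rw [Real.norm_of_nonneg (sq_nonneg _)]
    exact hdQ x
  set D : Eu N → ℝ := fun x => μ * Q x + (μ + lam) * (divV N v x) ^ 2 with hD
  have hD0 : ∀ x, 0 ≤ D x := fun x => add_nonneg (mul_nonneg hμ.le (hQ0 x))
    (mul_nonneg (by linarith) (sq_nonneg _))
  have hDc : Continuous D := (continuous_const.mul hQc).add (continuous_const.mul (hdc.pow 2))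
  have hDi : Integrable D := (hgrad.const_mul μ).add (hdi.const_mul (μ + lam))
  set k : ℝ := (a * γ / (γ - 1)) * M ^ γ with hk
  set H : Eu N → ℝ := fun x => 1 / 2 * M * ‖v x‖ ^ (3 : ℝ) + μ * (N * ‖v x‖ ^ (2 : ℝ) + Q x)
    + (μ + lam) * (‖v x‖ ^ (2 : ℝ) + (divV N v x) ^ 2) with hH
  have hHi : Integrable H := ((hv3.const_mul _).add (((hv2.const_mul _).add hgrad).const_mul _)).add
    ((hv2.add hdi).const_mul _)
  have hM0 : 0 ≤ M := (abs_nonneg _).trans (hM 0)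
  have hH0 : ∀ x, 0 ≤ H x := by
    intro x
    have h1 := hQ0 x
    have h2 : 0 < μ + lam := by linarith
    simp only [hH]; positivity
  obtain ⟨C, hC, σ, s1, s2, s3, s4, s5, s6, s7, s8⟩ := exists_cutoff N
  have cG : ∀ j, ContDiff ℝ 1 (flux N μ lam a γ ρ v j) := fun j => contDiff_flux hγ hρsm hvsm j
  -- the localised energy identity
  have hid : ∀ n, ∫ x, σ n x * D x = - ∫ x, ∑ j, pd N (σ n) j x * flux N μ lam a γ ρ v j x := by
    intro n
    have cσ := (s1 n).continuous
    have cσ' : ∀ j, Continuous (pd N (σ n) j) := fun j => (contDiff_pd (s1 n) j).continuous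
    have cG' : ∀ j, Continuous (pd N (flux N μ lam a γ ρ v j) j) := fun j =>
      ((cG j).continuous_fderiv (by simp)).clm_apply continuous_const
    have i1 : ∀ j, Integrable (fun x => pd N (σ n) j x * flux N μ lam a γ ρ v j x) := fun j =>
      ((cσ' j).mul (cG j).continuous).integrable_of_hasCompactSupport
        (((s2 n).fderiv_apply (𝕜 := ℝ) _).mul_right)
    have i2 : ∀ j, Integrable (fun x => σ n x * pd N (flux N μ lam a γ ρ v j) j x) := fun j =>
      (cσ.mul (cG' j)).integrable_of_hasCompactSupport ((s2 n).mul_right)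
    have i3 : ∀ j, Integrable (fun x => σ n x * flux N μ lam a γ ρ v j x) := fun j =>
      (cσ.mul (cG j).continuous).integrable_of_hasCompactSupport ((s2 n).mul_right)
    have hj : ∀ j, ∫ x, σ n x * pd N (flux N μ lam a γ ρ v j) j x
        = - ∫ x, pd N (σ n) j x * flux N μ lam a γ ρ v j x := fun j =>
      integral_mul_fderiv_eq_neg_fderiv_mul_of_integrable (i1 j) (i2 j) (i3 j)
        (fun x _ => (s1 n).differentiable (by simp) x)
        (fun x _ => (cG j).differentiable (by simp) x)
    have hDd : ∀ x, σ n x * D x = ∑ j, σ n x * pd N (flux N μ lam a γ ρ v j) j x := by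
      intro x
      rw [← Finset.mul_sum, div_flux hγ hρsm hvsm hρnn hcont hmom x]
    simp_rw [hDd]
    rw [integral_finsetSum _ fun j _ => i2 j, integral_finsetSum _ fun j _ => i1 j,
      ← Finset.sum_neg_distrib]
    exact Finset.sum_congr rfl fun j _ => hj j
  have hbound : ∀ n, |∫ x, σ n x * D x| ≤
      N * k * (∫ x, ‖fderiv ℝ (σ n) x‖ * ‖v x‖) + N * (C / ((n : ℝ) + 1)) * ∫ x, H x := by
    intro n
    have cσ : Continuous (fderiv ℝ (σ n)) := (s1 n).continuous_fderiv (by simp)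
    have i1 : Integrable (fun x => ‖fderiv ℝ (σ n) x‖ * ‖v x‖) :=
      (cσ.norm.mul hvsm.continuous.norm).integrable_of_hasCompactSupport
        ((((s2 n).fderiv (𝕜 := ℝ)).norm).mul_right)
    rw [hid n, abs_neg, ← integral_const_mul, ← integral_const_mul,
      ← integral_add (i1.const_mul _) (hHi.const_mul _), ← Real.norm_eq_abs]
    refine norm_integral_le_of_norm_le ((i1.const_mul _).add (hHi.const_mul _))
      (.of_forall fun x => ?_)
    refine (norm_sum_le _ _).trans ?_
    have hb : ∀ j, ‖pd N (σ n) j x * flux N μ lam a γ ρ v j x‖ ≤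
        k * (‖fderiv ℝ (σ n) x‖ * ‖v x‖) + (C / ((n : ℝ) + 1)) * H x := by
      intro j
      rw [norm_mul]
      have h1 : |flux N μ lam a γ ρ v j x| ≤ k * ‖v x‖ + H x :=
        flux_bound hμ hlam ha hγ hρnn hM j x
      calc ‖pd N (σ n) j x‖ * ‖flux N μ lam a γ ρ v j x‖
          ≤ ‖fderiv ℝ (σ n) x‖ * (k * ‖v x‖ + H x) :=
            mul_le_mul (abs_pd_le _ _ _) h1 (norm_nonneg _) (norm_nonneg _)
        _ = k * (‖fderiv ℝ (σ n) x‖ * ‖v x‖) + ‖fderiv ℝ (σ n) x‖ * H x := by ring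
        _ ≤ _ := by
          have := mul_le_mul_of_nonneg_right (s5 n x) (hH0 x)
          linarith
    refine (Finset.sum_le_sum fun j _ => hb j).trans_eq ?_
    rw [Finset.sum_const, Finset.card_univ, Fintype.card_fin, nsmul_eq_mul]
    ring
  have hlim0 : Tendsto (fun n => ∫ x, σ n x * D x) atTop (nhds 0) := by
    refine squeeze_zero_norm hbound ?_
    have h1 := (holder_tail hN hC s1 s2 s5 s7 s8 hvsm.continuous hvL).const_mul (N * k)
    have h2 : Tendsto (fun n : ℕ => C / ((n : ℝ) + 1)) atTop (nhds 0) :=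
      tendsto_const_nhds.div_atTop
        (tendsto_atTop_add_const_right _ _ tendsto_natCast_atTop_atTop)
    have h3 := (h2.const_mul (N : ℝ)).mul_const (∫ x, H x)
    simpa using h1.add h3
  have hlim : Tendsto (fun n => ∫ x, σ n x * D x) atTop (nhds (∫ x, D x)) := by
    refine tendsto_integral_of_dominated_convergence D
      (fun n => ((s1 n).continuous.mul hDc).aestronglyMeasurable) hDi
      (fun n => .of_forall fun x => ?_) (.of_forall (cut_tendsto D s6))
    rw [Real.norm_of_nonneg (mul_nonneg (s3 n x) (hD0 x))]
    exact mul_le_of_le_one_left (hD0 x) (s4 n x)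
  have hDzero : ∫ x, D x = 0 := tendsto_nhds_unique hlim hlim0
  have hDz : ∀ x, D x = 0 := by
    have h1 := (integral_eq_zero_iff_of_nonneg hD0 hDi).1 hDzero
    have h2 : D = 0 := (hDc.ae_eq_iff_eq volume continuous_const).1 h1
    exact fun x => congrFun h2 x
  have hQz : ∀ x, Q x = 0 := by
    intro x
    have h1 := hDz x
    have h2 : 0 ≤ (μ + lam) * (divV N v x) ^ 2 := mul_nonneg (by linarith) (sq_nonneg _)
    have h3 := mul_nonneg hμ.le (hQ0 x)
    have h4 : μ * Q x = 0 := by simp only [hD] at h1; linarith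
    exact (mul_eq_zero.1 h4).resolve_left hμ.ne'
  have hpd : ∀ i j x, pd N (fun y => v y i) j x = 0 := by
    intro i j x
    have h1 := (Finset.sum_eq_zero_iff_of_nonneg (fun i _ => Finset.sum_nonneg
      fun j _ => sq_nonneg (pd N (fun y => v y i) j x))).1 (hQz x) i (Finset.mem_univ i)
    have h2 := (Finset.sum_eq_zero_iff_of_nonneg
      (fun j _ => sq_nonneg (pd N (fun y => v y i) j x))).1 h1 j (Finset.mem_univ j)
    exact pow_eq_zero_iff (two_ne_zero) |>.1 h2
  have hconst : ∀ f : Eu N → ℝ, Differentiable ℝ f → (∀ j x, pd N f j x = 0) →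
      ∀ x, f x = f 0 := by
    intro f hf h x
    refine is_const_of_fderiv_eq_zero (𝕜 := ℝ) hf (fun y => ?_) x 0
    have h1 := fderiv_norm_sq_le f y
    have h2 : ∑ j, |fderiv ℝ f y (EuclideanSpace.single j 1)| = 0 :=
      Finset.sum_eq_zero fun j _ => by
        have := h j y
        unfold pd at this
        rw [this, abs_zero]
    rw [h2] at h1
    exact norm_le_zero_iff.1 h1
  have hvc : ∀ x, v x = v 0 := by
    intro x
    ext i
    exact hconst (fun y => v y i) (by have := hvsm.differentiable (by simp); fun_prop) (hpd i) x
  have hv0 : v 0 = 0 := by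
    simp_rw [hvc] at hvL
    have : Nonempty (Fin N) := ⟨⟨0, by omega⟩⟩
    have : Nontrivial (Eu N) := by
      rw [← Module.finrank_pos_iff (R := ℝ)]
      simp; omega
    have h1 : volume (Set.univ : Set (Eu N)) = ⊤ := measure_univ_of_isAddLeftInvariant volume
    rw [integrable_const_iff] at hvL
    rcases hvL with h | h
    · rw [Real.rpow_eq_zero (norm_nonneg _) hq0.ne'] at h
      exact norm_eq_zero.1 h
    · exact absurd (h.measure_univ_lt_top) (by rw [h1]; simp)
  have hvz : ∀ x, v x = 0 := fun x => (hvc x).trans hv0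
  refine ⟨hvz, ρ 0, fun x => ?_⟩
  have hvfun : v = fun _ => 0 := funext hvz
  have hpz : ∀ j x, pd N (fun y => a * ρ y ^ γ) j x = 0 := by
    intro j x
    have h1 := hmom x j
    subst hvfun
    have e1 : divV N (fun _ => (0 : Eu N)) = fun _ => 0 := by
      funext y; simp [divV, pd]
    have e2 : ∀ k, pd N (fun _ : Eu N => (0 : ℝ)) k = fun _ => 0 := by
      intro k; funext y; simp [pd]
    simp [e1, lap, e2] at h1
    exact h1
  have hpd1 : Differentiable ℝ (fun y => a * ρ y ^ γ) := fun y =>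
    ((hρsm.differentiable (by simp) y).hasFDerivAt.rpow_const
      (Or.inr hγ.le)).differentiableAt.const_mul a
  have h1 := hconst _ hpd1 hpz x
  have h2 := mul_left_cancel₀ ha.ne' h1
  exact (Real.rpow_left_inj (hρnn x) (hρnn 0) (by linarith)).1 h2
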